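/- Let r, s, n be positive integers with s ≤ r. Every Gallai r-coloring of the edges of an n-vertex tournament contains a directed path on at least n^{s/r} vertices whose edges use at most s colors. -/

import Mathlib

/-!
By the Gallai–Roy theorem, every set `S` of colors admits a directed path with colors in `S` that
has at least as many vertices as some proper coloring `g_S` of the graph of `S`-colored edges has
colors. Averaging over the `s`-sets `S`, it suffices to show
`∏_{|S| = s} |g_S(W)| ≥ |W| ^ (r - 1).choose (s - 1)` for `W` the set of all vertices.

This is proved by induction on `W` along a Gallai partition, a partition of `W` with only two
colors `i`, `j` between its blocks. Group the `s`-sets meeting `{i, j}` into fibers, indexed by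
the `(s - 1)`-sets `R` avoiding `i`, so that each fiber contains a set with `i` and a set with `j`.
Vertices in different blocks are then separated by some `g_S` with `S` in the fiber, so the boxes
`∏_S g_S(block)` over a fiber are disjoint and the sum of their sizes is at most
`∏_S |g_S(W)|`. There are `(r - 1).choose (s - 1)` fibers, and Hölder's inequality over the fibers
combines these bounds with the induction hypothesis for the blocks.
-/

section GallaiRoy

open Relation

variable {V : Type*} {E R : V → V → Prop}

lemma transGen_or_edge {u v x y : V}
    (h : TransGen (fun a b => E a b ∨ a = u ∧ b = v) x y) :
    TransGen E x y ∨ ReflTransGen E x u ∧ ReflTransGen E v y := by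
  induction h with
  | single h =>
    rcases h with h | ⟨rfl, rfl⟩
    · exact .inl (.single h)
    · exact .inr ⟨.refl, .refl⟩
  | tail _ h ih =>
    rcases h with h | ⟨rfl, rfl⟩
    · exact ih.imp (·.tail h) (.imp_right (·.tail h))
    · exact .inr ⟨ih.elim (·.to_reflTransGen) And.left, .refl⟩

lemma exists_acyclic_le_of_finite [Finite V] (R : V → V → Prop) :
    ∃ E ≤ R, (∀ x, ¬ TransGen E x x) ∧ ∀ u v, R u v → E u v ∨ ReflTransGen E v u := by
  obtain ⟨E, ⟨hER, hE⟩, hmax⟩ : ∃ E, Maximal (fun E => E ≤ R ∧ ∀ x, ¬ TransGen E x x) E := by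
    refine Set.Finite.exists_maximal (Set.toFinite _) ⟨⊥, bot_le, fun x h => ?_⟩
    obtain ⟨y, hxy, -⟩ := TransGen.head'_iff.1 h
    exact hxy
  refine ⟨E, hER, hE, fun u v huv => ?_⟩
  -- By maximality, an edge of `R` missing from `E` closes a cycle with `E`.
  by_contra! hno
  have hacyclic : ∀ x, ¬ TransGen (fun a b => E a b ∨ a = u ∧ b = v) x x := fun x hx =>
    (transGen_or_edge hx).elim (hE x) fun h => hno.2 (h.2.trans h.1)
  have hle : (fun a b => E a b ∨ a = u ∧ b = v) ≤ R := by
    rintro a b (hab | ⟨rfl, rfl⟩)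
    exacts [hER a b hab, huv]
  exact hno.1 (hmax ⟨hle, hacyclic⟩ (fun a b hab => .inl hab) u v (.inr ⟨rfl, rfl⟩))

lemma nodup_of_isChain_of_acyclic (hE : ∀ x, ¬ TransGen E x x) {l : List V}
    (hl : l.IsChain E) : l.Nodup := by
  have hpair : l.Pairwise (TransGen E) := (hl.imp fun _ _ => TransGen.single).pairwise
  refine hpair.imp ?_
  rintro x _ hx rfl
  exact hE x hx

lemma exists_chain_and_rank_of_acyclic [Finite V] (hE : ∀ x, ¬ TransGen E x x) :
    ∃ (l : List V) (f : V → ℕ), l.IsChain E ∧ (∀ v, f v < l.length) ∧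
      ∀ u v, E u v → f v < f u := by
  have := Fintype.ofFinite V
  let lengths : Set ℕ := {n | ∃ l : List V, l.IsChain E ∧ l.length = n}
  let tailLengths (v : V) : Set ℕ := {n | ∃ l : List V, (v :: l).IsChain E ∧ l.length = n}
  have hbdd : BddAbove lengths := by
    refine ⟨Fintype.card V, ?_⟩
    rintro _ ⟨l, hl, rfl⟩
    exact (nodup_of_isChain_of_acyclic hE hl).length_le_card
  have hbdd_tail (v : V) : BddAbove (tailLengths v) := by
    refine hbdd.mono ?_
    rintro _ ⟨l, hl, rfl⟩
    exact ⟨l, hl.tail, rfl⟩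
  have hlongest (v : V) : sSup (tailLengths v) ∈ tailLengths v :=
    Nat.sSup_mem ⟨0, [], .singleton v, rfl⟩ (hbdd_tail v)
  obtain ⟨l, hl, hlen⟩ : sSup lengths ∈ lengths := Nat.sSup_mem ⟨0, [], .nil, rfl⟩ hbdd
  refine ⟨l, fun v => sSup (tailLengths v), hl, fun v => ?_, fun u v huv => ?_⟩
  · obtain ⟨t, ht, htlen⟩ := hlongest v
    rw [hlen]
    exact le_csSup hbdd ⟨v :: t, ht, by simp [htlen]⟩
  · obtain ⟨t, ht, htlen⟩ := hlongest v
    exact le_csSup (hbdd_tail u) ⟨v :: t, .cons_cons huv ht, by simp [htlen]⟩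

/-- The **Gallai–Roy theorem**. -/
theorem exists_chain_colorable_length [Finite V] (R : V → V → Prop) :
    ∃ l : List V, l.Nodup ∧ l.IsChain R ∧ (SimpleGraph.fromRel R).Colorable l.length := by
  obtain ⟨E, hER, hE, hback⟩ := exists_acyclic_le_of_finite R
  obtain ⟨l, f, hl, hlt, hdesc⟩ := exists_chain_and_rank_of_acyclic hE
  have hdesc' {u v : V} (h : TransGen E u v) : f v < f u := by
    induction h with
    | single h => exact hdesc _ _ h
    | tail _ h ih => exact (hdesc _ _ h).trans ih
  have hne {u v : V} (huv : u ≠ v) (h : R u v) : f u ≠ f v := by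
    rcases hback u v h with h | h
    · exact (hdesc u v h).ne'
    · exact (hdesc' ((reflTransGen_iff_eq_or_transGen.1 h).resolve_left huv)).ne
  refine ⟨l, nodup_of_isChain_of_acyclic hE hl, hl.imp hER,
    ⟨.mk (fun v => ⟨f v, hlt v⟩) fun {u v} huv h => ?_⟩⟩
  rw [Fin.mk.injEq] at h
  exact huv.2.elim (hne huv.1 · h) (hne huv.1.symm · h.symm)

end GallaiRoy

universe u

section Gallai

variable {V : Type u} {C : Type*} {c : Sym2 V → C}

/-- `c` is a Gallai coloring: no triangle is rainbow. Edges are unordered pairs. The condition holds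
for every `c` when two of the three vertices coincide, so the colors of loops are irrelevant. -/
def IsGallaiColoring (c : Sym2 V → C) : Prop :=
  ∀ u v w, c s(u, v) = c s(v, w) ∨ c s(v, w) = c s(u, w) ∨ c s(u, v) = c s(u, w)

lemma isGallaiColoring_lift {c : V → V → C} (hsym : ∀ u v, c u v = c v u)
    (hGallai : ∀ u v w : V, u ≠ v → v ≠ w → u ≠ w →
      ¬(c u v ≠ c v w ∧ c v w ≠ c u w ∧ c u v ≠ c u w)) :
    IsGallaiColoring (Sym2.lift ⟨c, hsym⟩) := by
  intro u v w
  simp only [Sym2.lift_mk]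
  by_cases huv : u = v
  · exact .inr (.inl (by rw [huv]))
  by_cases hvw : v = w
  · exact .inr (.inr (by rw [hvw]))
  by_cases huw : u = w
  · exact .inl (by rw [huw, hsym])
  · grind [hGallai u v w huv hvw huw]

/-- The fibers of `p` form a Gallai partition of `W`: at least two blocks, all pairs between two
given blocks have the same color, and between blocks only the colors `i` and `j` (possibly equal)
occur. -/
structure IsGallaiPartition {β : Type*} (c : Sym2 V → C) (W : Finset V) (i j : C) (p : V → β) :
    Prop where
  nontrivial : ∃ u ∈ W, ∃ v ∈ W, p u ≠ p v
  color_eq_or_eq {u v : V} :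
    u ∈ W → v ∈ W → p u ≠ p v → c s(u, v) = i ∨ c s(u, v) = j
  color_eq_color {u u' v v' : V} :
    u ∈ W → u' ∈ W → v ∈ W → v' ∈ W → p u = p u' → p v = p v' → p u ≠ p v →
      c s(u, v) = c s(u', v')

/-- The graph on all of `V` whose edges are the pairs inside `W` with color in `D`; the vertices
outside `W` are isolated. -/
def colorGraph (c : Sym2 V → C) (W : Set V) (D : Set C) : SimpleGraph V :=
  .fromEdgeSet (W.sym2 ∩ c ⁻¹' D)

lemma colorGraph_adj {W : Set V} {D : Set C} {u v : V} :
    (colorGraph c W D).Adj u v ↔ ((u ∈ W ∧ v ∈ W) ∧ c s(u, v) ∈ D) ∧ u ≠ v :=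
  Iff.rfl

variable {W : Set V} {D : Set C} {u v w x y : V}

lemma color_notMem_of_not_reachable (hu : u ∈ W) (hv : v ∈ W)
    (h : ¬ (colorGraph c W D).Reachable u v) : c s(u, v) ∉ D := by
  refine fun hD => h (SimpleGraph.Adj.reachable (colorGraph_adj.2 ⟨⟨⟨hu, hv⟩, hD⟩, ?_⟩))
  rintro rfl
  exact h .rfl

lemma exists_reachable_color_mem_of_reachable_insert (hv : v ∉ W) (hx : x ∈ W)
    (h : (colorGraph c (insert v W) D).Reachable x v) :
    ∃ y ∈ W, (colorGraph c W D).Reachable x y ∧ c s(v, y) ∈ D := by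
  let component : Set V := {y ∈ W | (colorGraph c W D).Reachable x y}
  obtain ⟨p⟩ := h
  obtain ⟨e, -, ⟨hfst, hreach⟩, hsnd⟩ :=
    p.exists_boundary_dart component ⟨hx, .rfl⟩ (fun hmem => hv hmem.1)
  obtain ⟨⟨⟨-, he⟩, hcolor⟩, hne⟩ := colorGraph_adj.1 e.adj
  rcases he with he | he
  · exact ⟨e.fst, hfst, hreach, by rwa [he, Sym2.eq_swap] at hcolor⟩
  · refine absurd ⟨he, hreach.trans (SimpleGraph.Adj.reachable ?_)⟩ hsnd
    exact colorGraph_adj.2 ⟨⟨⟨hfst, he⟩, hcolor⟩, hne⟩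

namespace IsGallaiColoring

lemma color_eq_of_reachable (hc : IsGallaiColoring c) (hx : x ∈ W)
    (huv : (colorGraph c W D).Reachable u v) (hux : ¬ (colorGraph c W D).Reachable u x) :
    c s(u, x) = c s(v, x) := by
  obtain ⟨p⟩ := huv
  induction p with
  | nil => rfl
  | @cons u w v huw _ ih =>
    have hwx : ¬ (colorGraph c W D).Reachable w x := fun h => hux (huw.reachable.trans h)
    rw [← ih hwx]
    obtain ⟨⟨⟨hu, hw⟩, huwD⟩, -⟩ := colorGraph_adj.1 huw
    have huxD := color_notMem_of_not_reachable hu hx hux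
    have hwxD := color_notMem_of_not_reachable hw hx hwx
    rcases hc u w x with h | h | h
    · exact absurd (h ▸ huwD) hwxD
    · exact h.symm
    · exact absurd (h ▸ huwD) huxD

lemma color_eq_of_reachable_of_reachable (hc : IsGallaiColoring c) (hx : x ∈ W) (hv : v ∈ W)
    (huv : (colorGraph c W D).Reachable u v) (hxy : (colorGraph c W D).Reachable x y)
    (hux : ¬ (colorGraph c W D).Reachable u x) : c s(u, x) = c s(v, y) := by
  have hxv : ¬ (colorGraph c W D).Reachable x v := fun h => hux (huv.trans h.symm)
  rw [hc.color_eq_of_reachable hx huv hux, Sym2.eq_swap, hc.color_eq_of_reachable hv hxy hxv,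
    Sym2.eq_swap]

section NewVertex

-- `W` is disconnected in the colors `D`, but becomes connected in them once `v` is added.
variable (hattach : ∀ x ∈ W, ∃ y ∈ W, (colorGraph c W D).Reachable x y ∧ c s(v, y) ∈ D)
  (hsplit : ∀ x ∈ W, ∃ y ∈ W, ¬ (colorGraph c W D).Reachable x y)

include hattach hsplit

lemma color_eq_of_color_mem (hc : IsGallaiColoring c) (hx : x ∈ W) (hy : y ∈ W)
    (hvx : c s(v, x) ∈ D) (hvy : c s(v, y) ∈ D) : c s(v, x) = c s(v, y) := by
  have eq_of_not_reachable {x y : V} (hx : x ∈ W) (hy : y ∈ W) (hvx : c s(v, x) ∈ D)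
      (hvy : c s(v, y) ∈ D) (hxy : ¬ (colorGraph c W D).Reachable x y) :
      c s(v, x) = c s(v, y) := by
    have hxyD := color_notMem_of_not_reachable hx hy hxy
    rcases hc v x y with h | h | h
    · exact absurd (h ▸ hvx) hxyD
    · exact absurd (h ▸ hvy) hxyD
    · exact h
  by_cases hxy : (colorGraph c W D).Reachable x y
  · obtain ⟨z, hz, hxz⟩ := hsplit x hx
    obtain ⟨z', hz', hzz', hvz'⟩ := hattach z hz
    have hxz' : ¬ (colorGraph c W D).Reachable x z' := fun h => hxz (h.trans hzz'.symm)
    have hyz' : ¬ (colorGraph c W D).Reachable y z' := fun h => hxz' (hxy.trans h)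
    exact (eq_of_not_reachable hx hz' hvx hvz' hxz').trans
      (eq_of_not_reachable hy hz' hvy hvz' hyz').symm
  · exact eq_of_not_reachable hx hy hvx hvy hxy

lemma color_eq_of_color_notMem (hc : IsGallaiColoring c) (hx : x ∈ W) (hy : y ∈ W)
    (hvx : c s(v, x) ∉ D) (hvy : c s(v, y) ∉ D) : c s(v, x) = c s(v, y) := by
  have eq_of_not_reachable {x z : V} (hx : x ∈ W) (hz : z ∈ W) (hvx : c s(v, x) ∉ D)
      (hxz : ¬ (colorGraph c W D).Reachable x z) : c s(v, x) = c s(x, z) := by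
    obtain ⟨z', hz', hzz', hvz'⟩ := hattach z hz
    have hxz' : ¬ (colorGraph c W D).Reachable x z' := fun h => hxz (h.trans hzz'.symm)
    have hxzD := color_notMem_of_not_reachable hx hz' hxz'
    rw [hc.color_eq_of_reachable_of_reachable hz hx .rfl hzz' hxz]
    rcases hc v x z' with h | h | h
    · exact h
    · exact absurd (h ▸ hvz') hxzD
    · exact absurd (h ▸ hvz') hvx
  by_cases hxy : (colorGraph c W D).Reachable x y
  · obtain ⟨z, hz, hxz⟩ := hsplit x hx
    have hyz : ¬ (colorGraph c W D).Reachable y z := fun h => hxz (hxy.trans h)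
    rw [eq_of_not_reachable hx hz hvx hxz, eq_of_not_reachable hy hz hvy hyz]
    exact hc.color_eq_of_reachable hz hxy hxz
  · rw [eq_of_not_reachable hx hy hvx hxy,
      eq_of_not_reachable hy hx hvy fun h => hxy h.symm, Sym2.eq_swap]

lemma exists_two_colors_at (hc : IsGallaiColoring c) (hW : W.Nonempty) :
    ∃ i j, ∀ x ∈ W, c s(v, x) = i ∨ c s(v, x) = j := by
  obtain ⟨w, hw⟩ := hW
  obtain ⟨y, hy, -, hvy⟩ := hattach w hw
  by_cases h : ∃ x ∈ W, c s(v, x) ∉ D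
  · obtain ⟨x, hx, hvx⟩ := h
    refine ⟨c s(v, x), c s(v, y), fun z hz => ?_⟩
    by_cases hvz : c s(v, z) ∈ D
    · exact .inr (hc.color_eq_of_color_mem hattach hsplit hz hy hvz hvy)
    · exact .inl (hc.color_eq_of_color_notMem hattach hsplit hz hx hvz hvx)
  · push Not at h
    exact ⟨c s(v, y), c s(v, y), fun z hz =>
      .inl (hc.color_eq_of_color_mem hattach hsplit hz hy (h z hz) hvy)⟩

end NewVertex

theorem exists_pair_not_reachable (hc : IsGallaiColoring c) {W : Finset V}
    (hW : W.Nontrivial) :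
    ∃ i j, ∃ u ∈ W, ∃ v ∈ W, ¬ (colorGraph c W {i, j}ᶜ).Reachable u v := by
  classical
  induction W using Finset.induction_on with
  | empty => simp at hW
  | insert v W hv ih =>
    rw [Finset.coe_insert]
    have hne : W.Nonempty := by
      rw [Finset.nonempty_iff_ne_empty]
      rintro rfl
      simp at hW
    -- If `v` sees only the colors `i` and `j`, it is isolated in the graph of the other colors.
    suffices h : (∃ i j, ∀ x ∈ W, c s(v, x) = i ∨ c s(v, x) = j) ∨
        ∃ i j, ∃ x ∈ W, ¬ (colorGraph c (insert v W) {i, j}ᶜ).Reachable x v by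
      rcases h with ⟨i, j, h⟩ | ⟨i, j, x, hx, h⟩
      · obtain ⟨x, hx⟩ := hne
        refine ⟨i, j, x, Finset.mem_insert_of_mem hx, v, Finset.mem_insert_self v W, fun hxv => ?_⟩
        obtain ⟨y, hy, -, hvy⟩ := exists_reachable_color_mem_of_reachable_insert hv hx hxv
        exact hvy (h y hy)
      · exact ⟨i, j, x, Finset.mem_insert_of_mem hx, v, Finset.mem_insert_self v W, h⟩
    rcases hne.exists_eq_singleton_or_nontrivial with ⟨w, rfl⟩ | hW'
    · exact .inl ⟨c s(v, w), c s(v, w), by simp⟩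
    · obtain ⟨i, j, a, ha, b, hb, hab⟩ := ih hW'
      refine or_iff_not_imp_right.2 fun hconn => ?_
      push Not at hconn
      refine hc.exists_two_colors_at (D := {i, j}ᶜ) (fun x hx =>
        exists_reachable_color_mem_of_reachable_insert hv hx (hconn i j x hx)) (fun x _ => ?_) hne
      by_cases hxa : (colorGraph c W {i, j}ᶜ).Reachable x a
      · exact ⟨b, hb, fun hxb => hab (hxa.symm.trans hxb)⟩
      · exact ⟨a, ha, hxa⟩

theorem exists_isGallaiPartition (hc : IsGallaiColoring c) {W : Finset V} (hW : W.Nontrivial) :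
    ∃ (i j : C) (β : Type u) (p : V → β), IsGallaiPartition c W i j p := by
  obtain ⟨i, j, hsplit⟩ := hc.exists_pair_not_reachable hW
  refine ⟨i, j, _, (colorGraph c W {i, j}ᶜ).connectedComponentMk, ?_, ?_, ?_⟩ <;>
    simp only [ne_eq, SimpleGraph.ConnectedComponent.eq]
  · exact hsplit
  · intro u v hu hv huv
    simpa [or_iff_not_imp_left] using color_notMem_of_not_reachable (W := (W : Set V)) hu hv huv
  · intro u u' v v' _ hu' hv _ huu' hvv' huv
    exact hc.color_eq_of_reachable_of_reachable (W := (W : Set V)) hv hu' huu' hvv' huv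

end IsGallaiColoring

end Gallai

section Inequalities

open scoped ENNReal
open MeasureTheory

variable {ι β : Type*}

lemma sum_prod_rpow_le_prod_sum_rpow (I : Finset ι) (B : Finset β) (x : ι → β → ℝ≥0∞)
    {p : ι → ℝ} (hp : ∑ i ∈ I, p i = 1) (hp₀ : ∀ i ∈ I, 0 ≤ p i) :
    ∑ b ∈ B, ∏ i ∈ I, x i b ^ p i ≤ ∏ i ∈ I, (∑ b ∈ B, x i b) ^ p i := by
  let : MeasurableSpace β := ⊤
  simpa [lintegral_finset] using ENNReal.lintegral_prod_norm_pow_le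
    (μ := Measure.count.restrict (B : Set β)) I (fun i _ => measurable_from_top.aemeasurable)
    hp hp₀

lemma sum_pow_card_le_mul_prod_sum {I : Finset ι} (hI : I.Nonempty) (B : Finset β)
    {m : β → ℝ≥0∞} {M : ℝ≥0∞} {x : ι → β → ℝ≥0∞}
    (hm : ∀ b ∈ B, m b ^ I.card ≤ M * ∏ i ∈ I, x i b) :
    (∑ b ∈ B, m b) ^ I.card ≤ M * ∏ i ∈ I, ∑ b ∈ B, x i b := by
  set p : ℝ := (I.card : ℝ)⁻¹ with hp
  have hp₀ : 0 ≤ p := by positivity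
  have hI₀ : (I.card : ℝ) ≠ 0 := by exact_mod_cast hI.card_ne_zero
  have hroot {a : ℝ≥0∞} {f : ι → ℝ≥0∞} (h : a ^ I.card ≤ M * ∏ i ∈ I, f i) :
      a ≤ M ^ p * ∏ i ∈ I, f i ^ p := by
    calc a = (a ^ I.card) ^ p := (ENNReal.pow_rpow_inv_natCast hI.card_ne_zero a).symm
      _ ≤ (M * ∏ i ∈ I, f i) ^ p := by gcongr
      _ = M ^ p * ∏ i ∈ I, f i ^ p := by
        rw [ENNReal.mul_rpow_of_nonneg _ _ hp₀, ENNReal.prod_rpow_of_nonneg hp₀]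
  have hsum : ∑ b ∈ B, m b ≤ (M * ∏ i ∈ I, ∑ b ∈ B, x i b) ^ p := by
    calc ∑ b ∈ B, m b ≤ ∑ b ∈ B, M ^ p * ∏ i ∈ I, x i b ^ p :=
          Finset.sum_le_sum fun b hb => hroot (hm b hb)
      _ = M ^ p * ∑ b ∈ B, ∏ i ∈ I, x i b ^ p := by rw [Finset.mul_sum]
      _ ≤ M ^ p * ∏ i ∈ I, (∑ b ∈ B, x i b) ^ p := by
        gcongr
        exact sum_prod_rpow_le_prod_sum_rpow I B x (by simp [hp, hI₀]) fun _ _ => hp₀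
      _ = (M * ∏ i ∈ I, ∑ b ∈ B, x i b) ^ p := by
        rw [ENNReal.mul_rpow_of_nonneg _ _ hp₀, ENNReal.prod_rpow_of_nonneg hp₀]
  calc (∑ b ∈ B, m b) ^ I.card ≤ ((M * ∏ i ∈ I, ∑ b ∈ B, x i b) ^ p) ^ I.card := by gcongr
    _ = M * ∏ i ∈ I, ∑ b ∈ B, x i b := ENNReal.rpow_inv_natCast_pow hI.card_ne_zero _

lemma sum_pow_card_le_mul_prod_sum_nat {I : Finset ι} (hI : I.Nonempty) (B : Finset β)
    {m : β → ℕ} {M : ℕ} {x : ι → β → ℕ} (hm : ∀ b ∈ B, m b ^ I.card ≤ M * ∏ i ∈ I, x i b) :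
    (∑ b ∈ B, m b) ^ I.card ≤ M * ∏ i ∈ I, ∑ b ∈ B, x i b := by
  have h := sum_pow_card_le_mul_prod_sum (m := fun b => (m b : ℝ≥0∞)) (M := M)
    (x := fun i b => (x i b : ℝ≥0∞)) hI B fun b hb => by exact_mod_cast hm b hb
  exact_mod_cast h

lemma sum_prod_card_le_prod_card {α : ι → Type*} (I : Finset ι) (B : Finset β)
    {A : β → ∀ i, Finset (α i)} {T : ∀ i, Finset (α i)} (hA : ∀ b ∈ B, ∀ i ∈ I, A b i ⊆ T i)
    (hdisj : ∀ b ∈ B, ∀ b' ∈ B, b ≠ b' → ∃ i ∈ I, Disjoint (A b i) (A b' i)) :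
    ∑ b ∈ B, ∏ i ∈ I, (A b i).card ≤ ∏ i ∈ I, (T i).card := by
  classical
  have hbox : (B : Set β).PairwiseDisjoint fun b => I.pi (A b) := by
    intro b hb b' hb' hbb'
    obtain ⟨i, hi, hdis⟩ := hdisj b hb b' hb' hbb'
    exact Finset.disjoint_left.2 fun f hf hf' => Finset.disjoint_left.1 hdis
      (Finset.mem_pi.1 hf i hi) (Finset.mem_pi.1 hf' i hi)
  simp_rw [← Finset.card_pi]
  rw [← Finset.card_biUnion hbox]
  exact Finset.card_le_card <| Finset.biUnion_subset.2 fun b hb f hf =>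
    Finset.mem_pi.2 fun i hi => hA b hb i hi (Finset.mem_pi.1 hf i hi)

lemma exists_rpow_le_of_pow_le_prod {t : Finset ι} (ht : t.Nonempty) {f : ι → ℕ} {n k : ℕ}
    (h : n ^ k ≤ ∏ i ∈ t, f i) : ∃ i ∈ t, (n : ℝ) ^ ((k : ℝ) / t.card) ≤ f i := by
  obtain ⟨i, hi, hmax⟩ := t.exists_max_image f ht
  refine ⟨i, hi, ?_⟩
  have hpow : n ^ k ≤ f i ^ t.card := h.trans (Finset.prod_le_pow_card t f (f i) hmax)
  calc (n : ℝ) ^ ((k : ℝ) / t.card) = ((n : ℝ) ^ k) ^ (t.card : ℝ)⁻¹ := by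
        rw [div_eq_mul_inv, Real.rpow_mul n.cast_nonneg, Real.rpow_natCast]
    _ ≤ ((f i : ℝ) ^ t.card) ^ (t.card : ℝ)⁻¹ := by
        gcongr
        exact_mod_cast hpow
    _ = f i := Real.pow_rpow_inv_natCast (f i).cast_nonneg ht.card_ne_zero

lemma choose_div_choose_add_one {r s : ℕ} (h : s ≤ r) :
    (r.choose s : ℝ) / (r + 1).choose (s + 1) = (s + 1 : ℕ) / (r + 1 : ℕ) := by
  have hpos : 0 < (r + 1).choose (s + 1) := Nat.choose_pos (by omega)
  rw [div_eq_div_iff (by positivity) (by positivity)]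
  exact_mod_cast (by linarith [Nat.add_one_mul_choose_eq r s] :
    r.choose s * (r + 1) = (s + 1) * (r + 1).choose (s + 1))

end Inequalities

section PowersetCard

variable {C : Type*} [DecidableEq C]

/-- `S` without `i`, or without `j` if `S` does not contain `i`; used to group the sets that meet
`{i, j}`. -/
def eraseEither (i j : C) (S : Finset C) : Finset C :=
  if i ∈ S then S.erase i else S.erase j

variable [Fintype C]

/-- The `(s + 1)`-sets that meet `{i, j}` and are mapped to `R` by `eraseEither i j`. -/
def eraseEitherFiber (s : ℕ) (i j : C) (R : Finset C) : Finset (Finset C) :=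
  {S ∈ Finset.univ.powersetCard (s + 1) | (i ∈ S ∨ j ∈ S) ∧ eraseEither i j S = R}

variable {s : ℕ} {i j : C} {R : Finset C}

lemma mem_eraseEitherFiber {S : Finset C} :
    S ∈ eraseEitherFiber s i j R ↔ S.card = s + 1 ∧ (i ∈ S ∨ j ∈ S) ∧ eraseEither i j S = R := by
  rw [eraseEitherFiber, Finset.mem_filter, Finset.mem_powersetCard_univ]

lemma exists_mem_eraseEitherFiber {k : C} (hk : k = i ∨ k = j)
    (hR : R ∈ (Finset.univ.erase i).powersetCard s) :
    ∃ S ∈ eraseEitherFiber s i j R, k ∈ S := by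
  obtain ⟨hRi, hcard⟩ := Finset.mem_powersetCard.1 hR
  have hiR : i ∉ R := fun h => Finset.notMem_erase i _ (hRi h)
  simp only [mem_eraseEitherFiber, eraseEither]
  by_cases hkR : k = i ∨ j ∈ R
  · exact ⟨insert i R, by grind⟩
  · exact ⟨insert j R, by grind⟩

lemma prod_powersetCard_eq_mul_prod_prod_eraseEitherFiber {M : Type*} [CommMonoid M]
    (s : ℕ) (i j : C) (F : Finset C → M) :
    ∏ S ∈ Finset.univ.powersetCard (s + 1), F S =
      (∏ S ∈ Finset.univ.powersetCard (s + 1) with ¬ (i ∈ S ∨ j ∈ S), F S) *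
        ∏ R ∈ (Finset.univ.erase i).powersetCard s, ∏ S ∈ eraseEitherFiber s i j R, F S := by
  have hmaps : ∀ S ∈ Finset.univ.powersetCard (s + 1) |>.filter fun S => i ∈ S ∨ j ∈ S,
      eraseEither i j S ∈ (Finset.univ.erase i).powersetCard s := by
    grind [eraseEither]
  simp_rw [eraseEitherFiber, ← Finset.filter_filter]
  rw [Finset.prod_fiberwise_of_maps_to hmaps, mul_comm, Finset.prod_filter_mul_prod_filter_not]

end PowersetCard

section Counting

variable {V : Type u} {C β : Type*} {c : Sym2 V → C} {W : Finset V} {i j : C} {p : V → β}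
  [DecidableEq β]

namespace IsGallaiPartition

lemma filter_ssubset (hp : IsGallaiPartition c W i j p) (b : β) : {w ∈ W | p w = b} ⊂ W := by
  obtain ⟨u, hu, v, hv, huv⟩ := hp.nontrivial
  rw [Finset.filter_ssubset]
  by_contra! h
  exact huv ((h u hu).trans (h v hv).symm)

variable {α : Finset C → Type*} [∀ S, DecidableEq (α S)]
  (g : ∀ S : Finset C, (colorGraph c Set.univ S).Coloring (α S))

lemma exists_disjoint_image (hp : IsGallaiPartition c W i j p) {T : Finset (Finset C)}
    (hT : ∀ k, k = i ∨ k = j → ∃ S ∈ T, k ∈ S) {b b' : β} (hb : b ∈ W.image p)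
    (hb' : b' ∈ W.image p) (hbb' : b ≠ b') :
    ∃ S ∈ T, Disjoint ({w ∈ W | p w = b}.image (g S)) ({w ∈ W | p w = b'}.image (g S)) := by
  obtain ⟨u, hu, rfl⟩ := Finset.mem_image.1 hb
  obtain ⟨v, hv, rfl⟩ := Finset.mem_image.1 hb'
  obtain ⟨S, hST, hS⟩ := hT _ (hp.color_eq_or_eq hu hv hbb')
  refine ⟨S, hST, ?_⟩
  simp only [Finset.disjoint_left, Finset.mem_image, Finset.mem_filter]
  rintro _ ⟨x, ⟨hx, hxu⟩, rfl⟩ ⟨y, ⟨hy, hyv⟩, hyx⟩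
  have hxy : x ≠ y := fun h => hbb' (by rw [← hxu, ← hyv, h])
  have hcolor : c s(x, y) ∈ S := by
    rwa [← hp.color_eq_color hu hx hv hy hxu.symm hyv.symm hbb']
  exact (g S).valid (colorGraph_adj.2 ⟨⟨⟨trivial, trivial⟩, hcolor⟩, hxy⟩) hyx.symm

lemma sum_prod_card_image_le (hp : IsGallaiPartition c W i j p) {T : Finset (Finset C)}
    (hT : ∀ k, k = i ∨ k = j → ∃ S ∈ T, k ∈ S) :
    ∑ b ∈ W.image p, ∏ S ∈ T, ({w ∈ W | p w = b}.image (g S)).card ≤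
      ∏ S ∈ T, (W.image (g S)).card :=
  sum_prod_card_le_prod_card T (W.image p)
    (fun _ _ _ _ => Finset.image_subset_image (Finset.filter_subset _ W))
    fun _ hb _ hb' => hp.exists_disjoint_image g hT hb hb'

variable [Fintype C] {s : ℕ}

lemma card_pow_le_prod_card_image (hp : IsGallaiPartition c W i j p) (hs : s < Fintype.card C)
    (hblock : ∀ b ∈ W.image p, {w ∈ W | p w = b}.card ^ (Fintype.card C - 1).choose s ≤
      ∏ S ∈ Finset.univ.powersetCard (s + 1), ({w ∈ W | p w = b}.image (g S)).card) :
    W.card ^ (Fintype.card C - 1).choose s ≤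
      ∏ S ∈ Finset.univ.powersetCard (s + 1), (W.image (g S)).card := by
  classical
  let I : Finset (Finset C) := (Finset.univ.erase i).powersetCard s
  let f (U : Finset V) (S : Finset C) : ℕ := (U.image (g S)).card
  let block (b : β) : Finset V := {w ∈ W | p w = b}
  let M : ℕ := ∏ S ∈ Finset.univ.powersetCard (s + 1) with ¬ (i ∈ S ∨ j ∈ S), f W S
  have hI : I.card = (Fintype.card C - 1).choose s := by simp [I]
  have hI₀ : I.Nonempty := by
    rw [← Finset.card_pos, hI]
    exact Nat.choose_pos (by omega)
  have hblock' : ∀ b ∈ W.image p, (block b).card ^ I.card ≤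
      M * ∏ R ∈ I, ∏ S ∈ eraseEitherFiber s i j R, f (block b) S := by
    intro b hb
    rw [hI]
    refine (hblock b hb).trans ?_
    rw [prod_powersetCard_eq_mul_prod_prod_eraseEitherFiber s i j]
    refine Nat.mul_le_mul_right _ (Finset.prod_le_prod' fun S _ => ?_)
    exact Finset.card_le_card (Finset.image_subset_image (Finset.filter_subset (p · = b) W))
  rw [prod_powersetCard_eq_mul_prod_prod_eraseEitherFiber s i j, ← hI,
    Finset.card_eq_sum_card_image p W]
  refine (sum_pow_card_le_mul_prod_sum_nat hI₀ (W.image p) hblock').trans ?_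
  refine Nat.mul_le_mul_left _ (Finset.prod_le_prod' fun R hR => ?_)
  exact hp.sum_prod_card_image_le g fun k hk => exists_mem_eraseEitherFiber hk hR

end IsGallaiPartition

theorem IsGallaiColoring.card_pow_le_prod_card_image [Fintype C] (hc : IsGallaiColoring c) {s : ℕ}
    (hs : s < Fintype.card C) {α : Finset C → Type*} [∀ S, DecidableEq (α S)]
    (g : ∀ S : Finset C, (colorGraph c Set.univ S).Coloring (α S)) (hW : W.Nonempty) :
    W.card ^ (Fintype.card C - 1).choose s ≤
      ∏ S ∈ Finset.univ.powersetCard (s + 1), (W.image (g S)).card := by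
  classical
  induction W using Finset.strongInduction with
  | _ W ih =>
    rcases hW.exists_eq_singleton_or_nontrivial with ⟨v, rfl⟩ | hW
    · simp
    · obtain ⟨i, j, β, p, hp⟩ := hc.exists_isGallaiPartition hW
      refine hp.card_pow_le_prod_card_image g hs fun b hb => ih _ (hp.filter_ssubset b) ?_
      obtain ⟨w, hw, hwb⟩ := Finset.mem_image.1 hb
      exact ⟨w, Finset.mem_filter.2 ⟨hw, hwb⟩⟩

end Counting

section Path

variable {V C : Type*} {c : Sym2 V → C}

theorem IsGallaiColoring.card_pow_le_prod_of_colorable [Fintype V] [Fintype C]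
    (hc : IsGallaiColoring c) {s : ℕ} (hs : s < Fintype.card C) {k : Finset C → ℕ}
    (hk : ∀ S : Finset C, (colorGraph c Set.univ S).Colorable (k S)) :
    Fintype.card V ^ (Fintype.card C - 1).choose s ≤
      ∏ S ∈ Finset.univ.powersetCard (s + 1), k S := by
  classical
  cases isEmpty_or_nonempty V with
  | inl _ => simp [Nat.choose_eq_zero_iff, Nat.le_sub_one_of_lt hs]
  | inr _ =>
    refine (hc.card_pow_le_prod_card_image hs (fun S => (hk S).some) Finset.univ_nonempty).trans ?_
    exact Finset.prod_le_prod' fun S _ => (Finset.card_le_univ _).trans_eq (Fintype.card_fin _)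

lemma exists_chain_colorGraph_colorable_length [Finite V] {o : V → V → Prop}
    (ho : ∀ u v, u ≠ v → o u v ∨ o v u) (c : Sym2 V → C) (S : Set C) :
    ∃ l : List V, l.Nodup ∧ l.IsChain (fun u v => o u v ∧ c s(u, v) ∈ S) ∧
      (colorGraph c Set.univ S).Colorable l.length := by
  obtain ⟨l, hnodup, hchain, hcol⟩ :=
    exists_chain_colorable_length fun u v => o u v ∧ c s(u, v) ∈ S
  refine ⟨l, hnodup, hchain, hcol.mono_left fun u v huv => ?_⟩
  obtain ⟨⟨-, hS⟩, hne⟩ := colorGraph_adj.1 huv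
  exact ⟨hne, (ho u v hne).imp (⟨·, hS⟩) (⟨·, Sym2.eq_swap ▸ hS⟩)⟩

theorem stmt_3_general [Fintype V] [Fintype C] {s : ℕ} (hs : 0 < s) (hsC : s ≤ Fintype.card C)
    {o : V → V → Prop} (ho : ∀ u v, u ≠ v → o u v ∨ o v u) (hc : IsGallaiColoring c) :
    ∃ S : Finset C, S.card = s ∧ ∃ l : List V, l.Nodup ∧
      l.IsChain (fun u v => o u v ∧ c s(u, v) ∈ S) ∧
        (Fintype.card V : ℝ) ^ ((s : ℝ) / Fintype.card C) ≤ l.length := by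
  obtain ⟨s, rfl⟩ := Nat.exists_eq_add_one.2 hs
  obtain ⟨r, hr⟩ := Nat.exists_eq_add_one.2 (hs.trans_le hsC)
  choose l hnodup hchain hcol using
    fun S : Finset C => exists_chain_colorGraph_colorable_length ho c (S : Set C)
  obtain ⟨S, hS, hlen⟩ := exists_rpow_le_of_pow_le_prod
    (Finset.powersetCard_nonempty.2 (by simpa using hsC))
    (hc.card_pow_le_prod_of_colorable hsC hcol)
  refine ⟨S, Finset.mem_powersetCard_univ.1 hS, l S, hnodup S, hchain S, ?_⟩
  rwa [Finset.card_powersetCard, Finset.card_univ, hr, Nat.add_sub_cancel,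
    choose_div_choose_add_one (by omega), ← hr] at hlen

end Path

/-- Every Gallai `r`-coloring (no rainbow triangle, orientations ignored) of an
`n`-vertex tournament contains a directed path on at least `n^(s/r)` vertices whose
edges use at most `s` colors, for positive integers `s ≤ r`. The tournament is given
by a relation `o` such that for distinct vertices exactly one orientation holds; a
directed path is a duplicate-free list of vertices with consecutive vertices joined
by forward edges. -/
theorem stmt_3 (r s n : ℕ) (hr : 0 < r) (hs : 0 < s) (hn : 0 < n) (hsr : s ≤ r)
    (o : Fin n → Fin n → Prop)
    (hirr : ∀ u, ¬ o u u)
    (ho : ∀ u v : Fin n, u ≠ v → (o u v ↔ ¬ o v u))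
    (c : Fin n → Fin n → Fin r)
    (hsym : ∀ u v, c u v = c v u)
    (hGallai : ∀ u v w : Fin n, u ≠ v → v ≠ w → u ≠ w →
      ¬(c u v ≠ c v w ∧ c v w ≠ c u w ∧ c u v ≠ c u w)) :
    ∃ S : Finset (Fin r), S.card ≤ s ∧
      ∃ l : List (Fin n), l.Nodup ∧
        l.Chain' (fun x y => o x y ∧ c x y ∈ S) ∧
        (n : ℝ) ^ ((s : ℝ) / (r : ℝ)) ≤ (l.length : ℝ) := by
  obtain ⟨S, hS, l, hnodup, hchain, hlen⟩ := stmt_3_general hs (by simpa using hsr)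
    (fun u v huv => or_iff_not_imp_right.2 (ho u v huv).2) (isGallaiColoring_lift hsym hGallai)
  exact ⟨S, hS.le, l, hnodup, hchain, by simpa only [Fintype.card_fin] using hlen⟩
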